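/- arXiv:2010.10583 — 2 statements merged into one kernel-verified Lean document; each statement's English description precedes it below -/
import Mathlib

section
/- Let A be a finite alphabet, Q a probability mass function on A, n a positive integer, and P a probability mass function on Aⁿ with average single-letter marginal P̄. Suppose 0 < ξ ≤ 1/2 and D(P ‖ Qⁿ) ≤ n·ξ²/(2 ln 2). Then |H(P̄) − H(Q)| ≤ −ξ·log₂(ξ/|A|), and consequently H(P) ≤ n·( H(Q) + ξ·log₂(|A|/ξ) ). In particular, if W is uniformly distributed on {1,…,K} and W is a function of a random string A^n with pmf P, then log₂ K ≤ n·( H(Q) + ξ·log₂(|A|/ξ) ). -/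
/-- Entropy (base 2) of a pmf on a finite set. -/
noncomputable def entropy {Ω : Type*} [Fintype Ω] (P : Ω → ℝ) : ℝ :=
  -∑ a, P a * Real.logb 2 (P a)

/-- Informational divergence (base 2) of two pmfs on a finite set. -/
noncomputable def kl {Ω : Type*} [Fintype Ω] (P Q : Ω → ℝ) : ℝ :=
  ∑ a, P a * Real.logb 2 (P a / Q a)

/-- The n-fold product pmf on strings of length `n`. -/
noncomputable def prodPmf {A : Type*} [Fintype A] (Q : A → ℝ) (n : ℕ) :
    (Fin n → A) → ℝ :=
  fun x => ∏ i, Q (x i)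

/-- The average single-letter marginal `P̄(a) = (1/n)·∑ᵢ P_i(a)` of a pmf on `Aⁿ`. -/
noncomputable def avgMarginal {A : Type*} [Fintype A] [DecidableEq A] (n : ℕ)
    (P : (Fin n → A) → ℝ) : A → ℝ :=
  fun a => (1 / (n : ℝ)) *
    ∑ i : Fin n, ∑ x ∈ Finset.univ.filter (fun x : Fin n → A => x i = a), P x

lemma aux_gibbs (p q : ℝ) (hp : 0 ≤ p) (hq : 0 ≤ q) (h : q = 0 → p = 0) :
    p * Real.log q - p * Real.log p ≤ q - p := by
  rcases hp.eq_or_lt with h0 | h0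
  · subst h0; simpa using hq
  have hq' : 0 < q := lt_of_le_of_ne hq (fun e => h0.ne' (h e.symm))
  have := Real.log_le_sub_one_of_pos (div_pos hq' h0)
  rw [Real.log_div hq'.ne' h0.ne'] at this
  have h2 := mul_le_mul_of_nonneg_left this hp
  have h3 : p * (q / p - 1) = q - p := by field_simp
  linarith

lemma aux_deriv (u : ℝ) (hu : 0 < u) :
    HasDerivAt (fun u : ℝ => Real.log u - (u - 1) * (5 * u + 1) / (2 * u * (u + 2)))
      ((u - 1) ^ 3 / (u ^ 2 * (u + 2) ^ 2)) u := by
  have h1 : HasDerivAt (fun u : ℝ => (u - 1) * (5 * u + 1))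
      (1 * (5 * u + 1) + (u - 1) * (5 * 1)) u :=
    ((hasDerivAt_id u).sub_const 1).mul (((hasDerivAt_id u).const_mul 5).add_const 1)
  have h2 : HasDerivAt (fun u : ℝ => 2 * u * (u + 2))
      ((2 * 1) * (u + 2) + (2 * u) * 1) u :=
    ((hasDerivAt_id u).const_mul 2).mul ((hasDerivAt_id u).add_const 2)
  have h3 := (Real.hasDerivAt_log hu.ne').sub (h1.div h2 (by positivity))
  refine HasDerivAt.congr_deriv h3 ?_
  field_simp
  ring

lemma aux_log (u : ℝ) (hu : 0 < u) :
    (u - 1) * (5 * u + 1) / (2 * u * (u + 2)) ≤ Real.log u := by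
  set f := fun u : ℝ => Real.log u - (u - 1) * (5 * u + 1) / (2 * u * (u + 2)) with hf
  have f1 : f 1 = 0 := by simp [hf]
  suffices h : f 1 ≤ f u by
    rw [f1] at h; simp only [hf] at h; linarith
  rcases le_total u 1 with h | h
  · have : AntitoneOn f (Set.Icc u 1) := by
      apply antitoneOn_of_deriv_nonpos (convex_Icc _ _)
      · intro x hx
        exact (aux_deriv x (by linarith [hx.1])).continuousAt.continuousWithinAt
      · intro x hx
        rw [interior_Icc] at hx
        exact (aux_deriv x (by linarith [hx.1])).differentiableAt.differentiableWithinAt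
      · intro x hx
        rw [interior_Icc] at hx
        rw [(aux_deriv x (by linarith [hx.1])).deriv]
        apply div_nonpos_of_nonpos_of_nonneg _ (by positivity)
        have : x - 1 ≤ 0 := by linarith [hx.2]
        exact Odd.pow_nonpos (by decide) this
    exact this ⟨le_rfl, h⟩ ⟨h, le_rfl⟩ h
  · have : MonotoneOn f (Set.Icc 1 u) := by
      apply monotoneOn_of_deriv_nonneg (convex_Icc _ _)
      · intro x hx
        exact (aux_deriv x (by linarith [hx.1])).continuousAt.continuousWithinAt
      · intro x hx
        rw [interior_Icc] at hx
        exact (aux_deriv x (by linarith [hx.1])).differentiableAt.differentiableWithinAt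
      · intro x hx
        rw [interior_Icc] at hx
        rw [(aux_deriv x (by linarith [hx.1])).deriv]
        have : 0 ≤ x - 1 := by linarith [hx.1]
        positivity
    exact this ⟨le_rfl, h⟩ ⟨h, le_rfl⟩ h

lemma aux_pinsker_pt (p q : ℝ) (hp : 0 ≤ p) (hq : 0 < q) :
    (p - q) + 3 / 2 * ((p - q) ^ 2 / (p + 2 * q)) ≤ p * Real.log p - p * Real.log q := by
  rcases hp.eq_or_lt with h0 | h0
  · subst h0
    have : (0 - q) ^ 2 / (0 + 2 * q) = q / 2 := by field_simp; ring
    rw [this]; simp; linarith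
  have h := mul_le_mul_of_nonneg_left (aux_log (p / q) (by positivity)) hp
  rw [Real.log_div h0.ne' hq.ne'] at h
  have : (p - q) + 3 / 2 * ((p - q) ^ 2 / (p + 2 * q)) =
      p * ((p / q - 1) * (5 * (p / q) + 1) / (2 * (p / q) * (p / q + 2))) := by
    field_simp; ring
  rw [this]; linarith

lemma aux_pinsker {A : Type*} [Fintype A] (p q : A → ℝ) (hp : ∀ a, 0 ≤ p a)
    (hq : ∀ a, 0 < q a) (hp1 : ∑ a, p a = 1) (hq1 : ∑ a, q a = 1) :
    (∑ a, |p a - q a|) ^ 2 ≤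
      2 * (∑ a, p a * Real.log (p a) - ∑ a, p a * Real.log (q a)) := by
  have h1 := Finset.sum_le_sum (fun a (_ : a ∈ Finset.univ) => aux_pinsker_pt (p a) (q a) (hp a) (hq a))
  rw [Finset.sum_add_distrib, Finset.sum_sub_distrib, Finset.sum_sub_distrib, hp1, hq1,
    ← Finset.mul_sum] at h1
  have h2 := Finset.sum_sq_le_sum_mul_sum_of_sq_le_mul Finset.univ
    (r := fun a => |p a - q a|) (f := fun a => (p a - q a) ^ 2 / (p a + 2 * q a))
    (g := fun a => p a + 2 * q a)
    (fun a _ => by have := hp a; have := hq a; positivity)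
    (fun a _ => by have := hp a; have := hq a; positivity)
    (fun a _ => by
      have := hp a; have := hq a
      have h : p a + 2 * q a ≠ 0 := by positivity
      apply le_of_eq
      simp only [sq_abs]
      field_simp)
  have h3 : ∑ a, (p a + 2 * q a) = 3 := by
    rw [Finset.sum_add_distrib, ← Finset.mul_sum, hp1, hq1]; norm_num
  rw [h3] at h2
  linarith

lemma aux_eta_half (t : ℝ) (h0 : 0 < t) (h1 : t ≤ 1 / 2) :
    Real.negMulLog (1 - t) ≤ Real.negMulLog t := by
  have ht : 0 < 1 - t := by linarith
  have hl : t / (1 - t) ≤ 1 := by rw [div_le_one ht]; linarith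
  have h := strictConcaveOn_log_Ioi.concaveOn.2 (Set.mem_Ioi.2 h0) (Set.mem_Ioi.2 one_pos)
    (show 0 ≤ t / (1 - t) by positivity) (show 0 ≤ 1 - t / (1 - t) by linarith) (by ring)
  have e : (t / (1 - t)) • t + (1 - t / (1 - t)) • (1 : ℝ) = 1 - t := by
    simp only [smul_eq_mul]; field_simp; ring
  rw [e, Real.log_one, smul_zero, add_zero, smul_eq_mul] at h
  have h2 := mul_le_mul_of_nonneg_left h ht.le
  have e2 : (1 - t) * (t / (1 - t) * Real.log t) = t * Real.log t := by field_simp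
  simp only [Real.negMulLog]
  linarith

lemma aux_eta_le (x t : ℝ) (hx : 0 ≤ x) (ht : 0 < t) (h1 : t ≤ 1 / 2) (hxt : x + t ≤ 1) :
    |Real.negMulLog x - Real.negMulLog (x + t)| ≤ Real.negMulLog t := by
  rw [abs_le]
  constructor
  · have a1 : t * Real.log t ≤ t * Real.log (x + t) :=
      mul_le_mul_of_nonneg_left (Real.log_le_log ht (by linarith)) ht.le
    have a2 : x * Real.log x ≤ x * Real.log (x + t) := by
      rcases hx.eq_or_lt with h | h
      · subst h; simp
      · exact mul_le_mul_of_nonneg_left (Real.log_le_log h (by linarith)) hx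
    simp only [Real.negMulLog]
    linarith
  · have hx1 : 0 < 1 - x := by linarith
    have hl : t / (1 - x) ≤ 1 := by rw [div_le_one hx1]; linarith
    have b1 : 0 ≤ t / (1 - x) := by positivity
    have b2 : 0 ≤ 1 - t / (1 - x) := by linarith
    have c1 := Real.concaveOn_negMulLog.2 (Set.mem_Ici.2 hx) (Set.mem_Ici.2 zero_le_one) b1 b2 (by ring)
    have c2 := Real.concaveOn_negMulLog.2 (Set.mem_Ici.2 hx) (Set.mem_Ici.2 zero_le_one) b2 b1 (by ring)
    have e1 : (t / (1 - x)) • x + (1 - t / (1 - x)) • (1 : ℝ) = 1 - t := by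
      simp only [smul_eq_mul]; field_simp; ring
    have e2 : (1 - t / (1 - x)) • x + (t / (1 - x)) • (1 : ℝ) = x + t := by
      simp only [smul_eq_mul]; field_simp; ring
    rw [e1] at c1
    rw [e2] at c2
    simp only [Real.negMulLog_one, smul_eq_mul, mul_zero, add_zero] at c1 c2
    have := aux_eta_half t ht h1
    linarith

lemma aux_eta (x y : ℝ) (hx : 0 ≤ x) (hy : 0 ≤ y) (hx1 : x ≤ 1) (hy1 : y ≤ 1)
    (h : |x - y| ≤ 1 / 2) :
    |Real.negMulLog x - Real.negMulLog y| ≤ Real.negMulLog |x - y| := by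
  rcases lt_trichotomy x y with hl | hl | hl
  · have e : |x - y| = y - x := by rw [abs_sub_comm]; exact abs_of_pos (by linarith)
    rw [e] at h ⊢
    have := aux_eta_le x (y - x) hx (by linarith) h (by linarith)
    rwa [add_sub_cancel] at this
  · subst hl; simp
  · have e : |x - y| = x - y := abs_of_pos (by linarith)
    rw [e] at h ⊢
    have := aux_eta_le y (x - y) hy (by linarith) h (by linarith)
    rwa [add_sub_cancel, abs_sub_comm] at this

lemma aux_fannes {A : Type*} [Fintype A] (p q : A → ℝ) (hp : ∀ a, 0 ≤ p a)
    (hq : ∀ a, 0 ≤ q a) (hp1 : ∑ a, p a = 1) (hq1 : ∑ a, q a = 1)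
    (ξ : ℝ) (hξ0 : 0 < ξ) (hξ1 : ξ ≤ 1 / 2) (hd : ∑ a, |p a - q a| ≤ ξ) :
    |∑ a, Real.negMulLog (p a) - ∑ a, Real.negMulLog (q a)| ≤
      -ξ * Real.log (ξ / Fintype.card A) := by
  have hne : Nonempty A := by
    by_contra h
    rw [not_nonempty_iff] at h
    simp at hp1
  have hk : 0 < Fintype.card A := Fintype.card_pos
  have hkR : (0 : ℝ) < Fintype.card A := by exact_mod_cast hk
  rcases Nat.lt_or_ge 1 (Fintype.card A) with hc | hc
  · have hc2 : (2 : ℝ) ≤ Fintype.card A := by exact_mod_cast hc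
    have le1 : ∀ (r : A → ℝ), (∀ a, 0 ≤ r a) → ∑ a, r a = 1 → ∀ a, r a ≤ 1 := by
      intro r hr h1 a
      rw [← h1]
      exact Finset.single_le_sum (fun b _ => hr b) (Finset.mem_univ a)
    have hda : ∀ a, |p a - q a| ≤ 1 / 2 := fun a =>
      (Finset.single_le_sum (f := fun a => |p a - q a|) (fun b _ => abs_nonneg _)
        (Finset.mem_univ a)).trans (hd.trans hξ1)
    have s1 : |∑ a, Real.negMulLog (p a) - ∑ a, Real.negMulLog (q a)| ≤
        ∑ a, Real.negMulLog |p a - q a| := by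
      rw [← Finset.sum_sub_distrib]
      refine (Finset.abs_sum_le_sum_abs _ _).trans (Finset.sum_le_sum fun a _ => ?_)
      exact aux_eta _ _ (hp a) (hq a) (le1 p hp hp1 a) (le1 q hq hq1 a) (hda a)
    have s2 := Finset.sum_le_sum (fun a (_ : a ∈ Finset.univ) =>
      aux_gibbs (|p a - q a|) (ξ / Fintype.card A) (abs_nonneg _) (by positivity)
        (fun h => absurd h (by positivity)))
    rw [Finset.sum_sub_distrib, Finset.sum_sub_distrib, ← Finset.sum_mul] at s2
    have s3 : ∑ _a : A, ξ / (Fintype.card A : ℝ) = ξ := by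
      simp; field_simp
    rw [s3] at s2
    have s4 : ∑ a, Real.negMulLog |p a - q a| = - ∑ a, |p a - q a| * Real.log |p a - q a| := by
      simp [Real.negMulLog]
    have s5 : Real.log (ξ / Fintype.card A) ≤ -1 := by
      rw [Real.log_le_iff_le_exp (by positivity), Real.exp_neg, div_le_iff₀ hkR]
      have h3 : Real.exp 1 < 4 := by linarith [Real.exp_one_lt_d9]
      have h4 : (4 : ℝ)⁻¹ ≤ (Real.exp 1)⁻¹ := inv_anti₀ (Real.exp_pos 1) h3.le
      nlinarith
    nlinarith
  · have hc1 : Fintype.card A = 1 := by omega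
    obtain ⟨a0, ha0⟩ := Fintype.card_eq_one_iff.1 hc1
    have : ∀ (r : A → ℝ), ∑ a, r a = r a0 := fun r =>
      Fintype.sum_eq_single a0 (fun x hx => absurd (ha0 x) hx)
    rw [this] at hp1 hq1
    rw [this, this, hp1, hq1, hc1]
    have := Real.log_nonpos hξ0.le (by linarith)
    simp
    nlinarith

lemma aux_avg {A : Type*} [Fintype A] [DecidableEq A] (n : ℕ) (hn : 0 < n)
    (P : (Fin n → A) → ℝ) (f : A → ℝ) :
    ∑ x, P x * ∑ i, f (x i) = n * ∑ a, avgMarginal n P a * f a := by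
  have hn' : (n : ℝ) ≠ 0 := by positivity
  have : ∀ a, (n : ℝ) * (avgMarginal n P a * f a) =
      ∑ i : Fin n, ∑ x ∈ Finset.univ.filter (fun x : Fin n → A => x i = a), P x * f (x i) := by
    intro a
    unfold avgMarginal
    rw [← mul_assoc, ← mul_assoc, mul_one_div_cancel hn', one_mul, Finset.sum_mul]
    refine Finset.sum_congr rfl fun i _ => ?_
    rw [Finset.sum_mul]
    refine Finset.sum_congr rfl fun x hx => ?_
    rw [(Finset.mem_filter.1 hx).2]
  rw [Finset.mul_sum, Finset.sum_congr rfl (fun a _ => this a), Finset.sum_comm]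
  simp_rw [Finset.mul_sum]
  rw [Finset.sum_comm]
  refine Finset.sum_congr rfl fun i _ => ?_
  exact (Finset.sum_fiberwise Finset.univ (fun x : Fin n → A => x i) (fun x => P x * f (x i))).symm

lemma aux_entropy {Ω : Type*} [Fintype Ω] (P : Ω → ℝ) :
    entropy P = (∑ a, Real.negMulLog (P a)) / Real.log 2 := by
  simp only [entropy, Real.negMulLog, Real.logb, neg_mul, Finset.sum_neg_distrib, neg_div,
    Finset.sum_div, mul_div_assoc]

lemma aux_sum_prod {A : Type*} [Fintype A] [DecidableEq A] (n : ℕ) (q : A → ℝ)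
    (hq : ∑ a, q a = 1) : ∑ x, prodPmf q n x = 1 := by
  have := Finset.prod_univ_sum (fun _ : Fin n => (Finset.univ : Finset A)) (fun _ a => q a)
  simp only [hq, Finset.prod_const_one, Fintype.piFinset_univ] at this
  exact this.symm

/-- If `0 < ξ ≤ 1/2` and `D(P ‖ Qⁿ) ≤ n·ξ²/(2 ln 2)`, then
`|H(P̄) − H(Q)| ≤ −ξ·log₂(ξ/|A|)`, hence `H(P) ≤ n·(H(Q) + ξ·log₂(|A|/ξ))`; in
particular, if `W` is uniform on `{1,…,K}` and a function of `Aⁿ ~ P`, then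
`log₂ K ≤ n·(H(Q) + ξ·log₂(|A|/ξ))`. -/
theorem rate_upper_bound {A : Type*} [Fintype A] [DecidableEq A]
    (n : ℕ) (hn : 0 < n)
    (Q : A → ℝ) (hQpos : ∀ a, 0 < Q a) (hQ1 : ∑ a, Q a = 1)
    (P : (Fin n → A) → ℝ) (hP0 : ∀ x, 0 ≤ P x) (hP1 : ∑ x, P x = 1)
    (ξ : ℝ) (hξ0 : 0 < ξ) (hξ1 : ξ ≤ 1 / 2)
    (hdiv : kl P (prodPmf Q n) ≤ (n : ℝ) * ξ ^ 2 / (2 * Real.log 2)) :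
    |entropy (avgMarginal n P) - entropy Q| ≤ -ξ * Real.logb 2 (ξ / Fintype.card A)
    ∧ entropy P ≤ (n : ℝ) * (entropy Q + ξ * Real.logb 2 ((Fintype.card A : ℝ) / ξ))
    ∧ ∀ K : ℕ, 0 < K → ∀ g : (Fin n → A) → Fin K,
        (∀ w, ∑ x ∈ Finset.univ.filter (fun x => g x = w), P x = 1 / (K : ℝ)) →
        Real.logb 2 (K : ℝ)
          ≤ (n : ℝ) * (entropy Q + ξ * Real.logb 2 ((Fintype.card A : ℝ) / ξ)) := by
  have hl2 : 0 < Real.log 2 := Real.log_pos one_lt_two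
  have hnR : (0 : ℝ) < n := by exact_mod_cast hn
  set p := avgMarginal n P with hp
  have hp0 : ∀ a, 0 ≤ p a := fun a => by
    simp only [hp, avgMarginal]
    exact mul_nonneg (by positivity)
      (Finset.sum_nonneg fun i _ => Finset.sum_nonneg fun x _ => hP0 x)
  have hp1 : ∑ a, p a = 1 := by
    have h := aux_avg n hn P (fun _ => 1)
    simp only [mul_one, Finset.sum_const, Finset.card_univ, Fintype.card_fin, nsmul_eq_mul,
      ← Finset.sum_mul, hP1, one_mul] at h
    exact (mul_left_cancel₀ hnR.ne' (by rw [mul_one]; exact h)).symm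
  have hpos : ∀ x, P x ≠ 0 → ∀ i, p (x i) ≠ 0 := by
    intro x hx i
    have hx' : 0 < P x := lt_of_le_of_ne (hP0 x) hx.symm
    simp only [hp, avgMarginal]
    have h1 : P x ≤ ∑ y ∈ Finset.univ.filter (fun y : Fin n → A => y i = x i), P y :=
      Finset.single_le_sum (fun y _ => hP0 y) (by simp)
    have h2 := Finset.single_le_sum
      (f := fun j : Fin n => ∑ y ∈ Finset.univ.filter (fun y : Fin n → A => y j = x i), P y)
      (fun j _ => Finset.sum_nonneg fun y _ => hP0 y) (Finset.mem_univ i)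
    exact (mul_pos (by positivity) (lt_of_lt_of_le hx' (h1.trans h2))).ne'
  have hlogprod : ∀ (q : A → ℝ), (∀ x, P x ≠ 0 → ∀ i, q (x i) ≠ 0) →
      ∑ x, P x * Real.log (prodPmf q n x) = n * ∑ a, p a * Real.log (q a) := by
    intro q hq
    rw [hp, ← aux_avg n hn P (fun a => Real.log (q a))]
    refine Finset.sum_congr rfl fun x _ => ?_
    by_cases hx : P x = 0
    · simp [hx]
    · rw [prodPmf, Real.log_prod (fun i _ => hq x hx i)]
  -- subadditivity of entropy
  have hsub : n * ∑ a, p a * Real.log (p a) ≤ ∑ x, P x * Real.log (P x) := by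
    rw [← hlogprod p hpos]
    have h := Finset.sum_le_sum (fun x (_ : x ∈ Finset.univ) =>
      aux_gibbs (P x) (prodPmf p n x) (hP0 x) (Finset.prod_nonneg fun i _ => hp0 _)
        (fun h => by
          by_contra hx
          obtain ⟨i, _, hi⟩ := Finset.prod_eq_zero_iff.1 h
          exact hpos x hx i hi))
    rw [Finset.sum_sub_distrib, Finset.sum_sub_distrib, aux_sum_prod n p hp1, hP1] at h
    linarith
  have hkl : kl P (prodPmf Q n) * Real.log 2 =
      ∑ x, P x * Real.log (P x) - n * ∑ a, p a * Real.log (Q a) := by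
    rw [← hlogprod Q (fun x _ i => (hQpos _).ne'), kl, Finset.sum_mul, ← Finset.sum_sub_distrib]
    refine Finset.sum_congr rfl fun x _ => ?_
    by_cases hx : P x = 0
    · simp [hx]
    · have : prodPmf Q n x ≠ 0 := Finset.prod_ne_zero_iff.2 fun i _ => (hQpos _).ne'
      rw [Real.logb, Real.log_div hx this]
      field_simp
  have hdiv' : kl P (prodPmf Q n) * Real.log 2 ≤ n * (ξ ^ 2 / 2) := by
    have := mul_le_mul_of_nonneg_right hdiv hl2.le
    have e : (n : ℝ) * ξ ^ 2 / (2 * Real.log 2) * Real.log 2 = n * (ξ ^ 2 / 2) := by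
      field_simp
    linarith
  have hK : ∑ a, p a * Real.log (p a) - ∑ a, p a * Real.log (Q a) ≤ ξ ^ 2 / 2 := by
    refine le_of_mul_le_mul_left ?_ hnR
    rw [mul_sub]; linarith
  have hd : ∑ a, |p a - Q a| ≤ ξ := by
    have := aux_pinsker p Q hp0 hQpos hp1 hQ1
    exact le_of_sq_le_sq (by linarith) hξ0.le
  have hF := aux_fannes p Q hp0 (fun a => (hQpos a).le) hp1 hQ1 ξ hξ0 hξ1 hd
  have c1 : |entropy p - entropy Q| ≤ -ξ * Real.logb 2 (ξ / Fintype.card A) := by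
    rw [aux_entropy, aux_entropy, ← sub_div, abs_div, abs_of_pos hl2, Real.logb, ← mul_div_assoc]
    exact div_le_div_of_nonneg_right hF hl2.le
  have hPp : entropy P ≤ n * entropy p := by
    rw [aux_entropy, aux_entropy, ← mul_div_assoc]
    apply div_le_div_of_nonneg_right _ hl2.le
    simp only [Real.negMulLog, neg_mul, Finset.sum_neg_distrib]
    linarith
  have c2 : entropy P ≤ (n : ℝ) * (entropy Q + ξ * Real.logb 2 ((Fintype.card A : ℝ) / ξ)) := by
    refine hPp.trans (mul_le_mul_of_nonneg_left ?_ hnR.le)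
    have e : Real.logb 2 ((Fintype.card A : ℝ) / ξ) = - Real.logb 2 (ξ / Fintype.card A) := by
      rw [← Real.logb_inv, inv_div]
    rw [e]
    linarith [(abs_le.1 c1).2]
  refine ⟨c1, c2, fun K hK0 g hg => le_trans ?_ c2⟩
  have hKR : (0 : ℝ) < K := by exact_mod_cast hK0
  have : ∑ x, P x * Real.logb 2 (P x) ≤ ∑ x, P x * (-Real.logb 2 K) := by
    refine Finset.sum_le_sum fun x _ => ?_
    rcases (hP0 x).eq_or_lt with h | h
    · simp [← h]
    refine mul_le_mul_of_nonneg_left ?_ (hP0 x)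
    have hle : P x ≤ 1 / (K : ℝ) := by
      rw [← hg (g x)]
      exact Finset.single_le_sum (fun y _ => hP0 y) (by simp)
    rw [← Real.logb_inv, ← one_div]
    exact Real.logb_le_logb_of_le one_lt_two h hle
  rw [← Finset.sum_mul, hP1] at this
  rw [entropy]
  linarith
end

section
/- Let A be a finite alphabet, Q a probability mass function on A, n a positive integer, and P a probability mass function on Aⁿ. Suppose 0 < ξ ≤ 1/2 and D(P ‖ Qⁿ) ≤ n·ξ²/(2 ln 2). Then H(P) ≥ n·( H(Q) − ξ·log₂(|A|/ξ) − ξ²/(2 ln 2) ). In particular, if A^n = f(W,Z) is a deterministic function of a pair (W,Z) with joint pmf P_{WZ} inducing output pmf P, then H(P_{WZ}) ≥ n·( H(Q) − ξ·log₂(|A|/ξ) − ξ²/(2 ln 2) ). -/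
lemma aux_exp_neg (t : ℝ) (ht : 0 ≤ t) : Real.exp (-t) ≤ 1 - t + t ^ 2 / 2 := by
  have h := Real.quadratic_le_exp_of_nonneg ht
  have h2 : 0 < 1 - t + t ^ 2 / 2 := by nlinarith [sq_nonneg (t - 1)]
  have h3 : Real.exp (-t) * Real.exp t = 1 := by rw [← Real.exp_add]; simp
  have h4 := Real.exp_pos (-t)
  have h5 : 1 ≤ (1 - t + t ^ 2 / 2) * Real.exp t := by
    calc (1:ℝ) ≤ (1 - t + t ^ 2 / 2) * (1 + t + t ^ 2 / 2) := by nlinarith [sq_nonneg (t ^ 2)]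
      _ ≤ _ := by gcongr
  by_contra hc
  push Not at hc
  have := mul_lt_mul_of_pos_right hc (Real.exp_pos t)
  linarith

lemma aux_sq (u L : ℝ) (hu : 0 ≤ u) (hL : 1 ≤ L) :
    u ^ 2 ≤ L ^ 2 - L + 2 * L * Real.exp (u - L) := by
  obtain ⟨d, rfl⟩ : ∃ d, u = L + d := ⟨u - L, by ring⟩
  have e : L + d - L = d := by ring
  rw [e]
  suffices h : d ^ 2 ≤ L * (2 * Real.exp d - 1 - 2 * d) by nlinarith
  rcases le_total 0 d with hd | hd
  · have h := Real.quadratic_le_exp_of_nonneg hd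
    nlinarith [mul_le_mul_of_nonneg_left h (by linarith : 0 ≤ L), mul_nonneg (sub_nonneg.2 hL) (sq_nonneg d)]
  · have h1 : d ^ 2 ≤ L * (-d) := by nlinarith
    have h2 : -d ≤ 2 * Real.exp d - 1 - 2 * d := by
      rcases le_total (-1) d with h | h
      · linarith [Real.add_one_le_exp d]
      · linarith [Real.exp_pos d]
    nlinarith

/-- second moment of the information density -/
lemma aux_moment {A : Type*} [Fintype A] (Q : A → ℝ) (hQpos : ∀ a, 0 < Q a)
    (hQ1 : ∑ a, Q a = 1) (ξ : ℝ) (hξ0 : 0 < ξ) (hξ1 : ξ ≤ 1 / 2) :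
    0 < Real.log ((Fintype.card A : ℝ) / ξ) ∧
    ∑ a, Q a * Real.log (Q a) ^ 2 ≤ Real.log ((Fintype.card A : ℝ) / ξ) ^ 2 := by
  have hle : ∀ a, Q a ≤ 1 := fun a => by
    rw [← hQ1]; exact Finset.single_le_sum (fun i _ => (hQpos i).le) (Finset.mem_univ a)
  have hne : Nonempty A := by
    by_contra h
    rw [not_nonempty_iff] at h
    simp at hQ1
  have hk1 : 1 ≤ Fintype.card A := Fintype.card_pos
  have hk1' : (1:ℝ) ≤ Fintype.card A := by exact_mod_cast hk1
  have hkξ : 2 * (Fintype.card A : ℝ) ≤ Fintype.card A / ξ := by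
    rw [le_div_iff₀ hξ0]; nlinarith
  refine ⟨Real.log_pos (by linarith), ?_⟩
  rcases Nat.eq_or_lt_of_le hk1 with hk | hk
  · have hs : Subsingleton A := Fintype.card_le_one_iff_subsingleton.1 hk.ge
    have h1 : ∀ a, Q a = 1 := fun a => by
      rw [← hQ1, Fintype.sum_subsingleton _ a]
    simp [h1]; positivity
  · have hk2 : (2:ℝ) ≤ Fintype.card A := by exact_mod_cast hk
    set k : ℝ := (Fintype.card A : ℝ) with hkdef
    set L := Real.log (2 * k) with hLdef
    have hL1 : 1 ≤ L := by
      have : L ≥ Real.log (2 * 2) := Real.log_le_log (by norm_num) (by linarith)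
      rw [Real.log_mul (by norm_num) (by norm_num)] at this
      linarith [Real.log_two_gt_d9]
    have hLL : L ≤ Real.log (k / ξ) := Real.log_le_log (by linarith) hkξ
    calc ∑ a, Q a * Real.log (Q a) ^ 2
        ≤ ∑ a, (Q a * (L ^ 2 - L) + L / k) := by
          apply Finset.sum_le_sum
          intro a _
          have h := aux_sq (-Real.log (Q a)) L (by linarith [Real.log_nonpos (hQpos a).le (hle a)]) hL1
          have e : Real.exp (-Real.log (Q a) - L) = 1 / (Q a * (2 * k)) := by
            rw [Real.exp_sub, Real.exp_neg, Real.exp_log (hQpos a), Real.exp_log (by linarith)]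
            have := (hQpos a).ne'
            field_simp
          rw [e] at h
          have h2 := mul_le_mul_of_nonneg_left h (hQpos a).le
          have := (hQpos a).ne'
          have e2 : Q a * (L ^ 2 - L + 2 * L * (1 / (Q a * (2 * k)))) = Q a * (L ^ 2 - L) + L / k := by
            have : k ≠ 0 := by linarith
            field_simp
          rw [e2] at h2
          simpa using h2
      _ = L ^ 2 := by
          rw [Finset.sum_add_distrib, ← Finset.sum_mul, hQ1]
          simp only [Finset.sum_const, Finset.card_univ, nsmul_eq_mul, ← hkdef]
          have : k ≠ 0 := by linarith
          field_simp; ring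
      _ ≤ _ := by gcongr

lemma aux_gibbs_s6 {Ω : Type*} [Fintype Ω] (P R : Ω → ℝ) (hP0 : ∀ x, 0 ≤ P x)
    (hP1 : ∑ x, P x = 1) (hR0 : ∀ x, 0 < R x) (hR1 : ∑ x, R x = 1) :
    ∑ x, P x * Real.log (R x) ≤ ∑ x, P x * Real.log (P x) := by
  have : ∑ x, (P x * Real.log (R x) - P x * Real.log (P x)) ≤ ∑ x, (R x - P x) := by
    apply Finset.sum_le_sum
    intro x _
    rcases (hP0 x).eq_or_lt with h | h
    · rw [← h]; simp [(hR0 x).le]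
    · have h1 := Real.log_le_sub_one_of_pos (div_pos (hR0 x) h)
      rw [Real.log_div (hR0 x).ne' h.ne'] at h1
      have h2 := mul_le_mul_of_nonneg_left h1 h.le
      have e : P x * (R x / P x - 1) = R x - P x := by field_simp
      linarith
  rw [Finset.sum_sub_distrib, Finset.sum_sub_distrib, hP1, hR1] at this
  linarith

lemma aux_main {A : Type*} [Fintype A] [DecidableEq A]
    (n : ℕ) (Q : A → ℝ) (hQpos : ∀ a, 0 < Q a) (hQ1 : ∑ a, Q a = 1)
    (P : (Fin n → A) → ℝ) (hP0 : ∀ x, 0 ≤ P x) (hP1 : ∑ x, P x = 1)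
    (l : ℝ) (hl : 0 < l) :
    l * ∑ x, P x * Real.log (∏ i, Q (x i)) ≤
      (∑ x, P x * Real.log (P x) - ∑ x, P x * Real.log (∏ i, Q (x i)))
      + n * (l * ∑ a, Q a * Real.log (Q a) + l ^ 2 / 2 * ∑ a, Q a * Real.log (Q a) ^ 2) := by
  have hle : ∀ a, Q a ≤ 1 := fun a => by
    rw [← hQ1]; exact Finset.single_le_sum (fun i _ => (hQpos i).le) (Finset.mem_univ a)
  have hne : Nonempty A := by
    by_contra h
    rw [not_nonempty_iff] at h
    simp at hQ1
  set S := ∑ a, Q a * Real.exp (l * Real.log (Q a)) with hS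
  have hSpos : 0 < S := Finset.sum_pos (fun a _ => mul_pos (hQpos a) (Real.exp_pos _)) Finset.univ_nonempty
  have hlogS : Real.log S ≤ l * ∑ a, Q a * Real.log (Q a) + l ^ 2 / 2 * ∑ a, Q a * Real.log (Q a) ^ 2 := by
    have h1 := Real.log_le_sub_one_of_pos hSpos
    have h2 : S ≤ ∑ a, (Q a + l * (Q a * Real.log (Q a)) + l ^ 2 / 2 * (Q a * Real.log (Q a) ^ 2)) := by
      apply Finset.sum_le_sum
      intro a _
      have h := aux_exp_neg (-(l * Real.log (Q a)))
        (by nlinarith [Real.log_nonpos (hQpos a).le (hle a)])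
      rw [neg_neg] at h
      have := mul_le_mul_of_nonneg_left h (hQpos a).le
      linarith
    rw [Finset.sum_add_distrib, Finset.sum_add_distrib, hQ1, ← Finset.mul_sum, ← Finset.mul_sum] at h2
    linarith
  have hg := aux_gibbs_s6 P (fun x => ∏ i, (Q (x i) * Real.exp (l * Real.log (Q (x i))) / S)) hP0 hP1
    (fun x => Finset.prod_pos fun i _ => div_pos (mul_pos (hQpos _) (Real.exp_pos _)) hSpos)
    (by
      rw [← Fintype.piFinset_univ, ← Finset.prod_univ_sum (fun _ : Fin n => (Finset.univ : Finset A))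
        (fun _ a => Q a * Real.exp (l * Real.log (Q a)) / S)]
      rw [← Finset.sum_div, ← hS, div_self hSpos.ne']
      simp)
  have e : ∀ x : Fin n → A, Real.log (∏ i, (Q (x i) * Real.exp (l * Real.log (Q (x i))) / S))
      = (1 + l) * Real.log (∏ i, Q (x i)) - n * Real.log S := by
    intro x
    rw [Real.log_prod (fun i _ => (div_pos (mul_pos (hQpos _) (Real.exp_pos _)) hSpos).ne'),
      Real.log_prod (fun i _ => (hQpos _).ne')]
    have : ∀ i, Real.log (Q (x i) * Real.exp (l * Real.log (Q (x i))) / S)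
        = (1 + l) * Real.log (Q (x i)) - Real.log S := fun i => by
      rw [Real.log_div (mul_pos (hQpos _) (Real.exp_pos _)).ne' hSpos.ne',
        Real.log_mul (hQpos _).ne' (Real.exp_pos _).ne', Real.log_exp]; ring
    simp [this, Finset.sum_sub_distrib, Finset.mul_sum]
  have e2 : ∑ x, P x * Real.log (∏ i, (Q (x i) * Real.exp (l * Real.log (Q (x i))) / S))
      = (1 + l) * ∑ x, P x * Real.log (∏ i, Q (x i)) - n * Real.log S := by
    simp only [e, mul_sub, Finset.sum_sub_distrib, ← Finset.sum_mul, hP1, Finset.mul_sum]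
    congr 1
    · exact Finset.sum_congr rfl fun x _ => by ring
    · ring
  have hn : (n:ℝ) * Real.log S ≤ _ := mul_le_mul_of_nonneg_left hlogS (Nat.cast_nonneg n)
  simp only [e2] at hg
  linarith

lemma entropy_mul {Ω : Type*} [Fintype Ω] (P : Ω → ℝ) :
    entropy P = (-∑ a, P a * Real.log (P a)) / Real.log 2 := by
  simp only [entropy, Real.logb, neg_div, Finset.sum_div, mul_div_assoc]

lemma aux_first {A : Type*} [Fintype A] [DecidableEq A]
    (n : ℕ) 
    (Q : A → ℝ) (hQpos : ∀ a, 0 < Q a) (hQ1 : ∑ a, Q a = 1)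
    (P : (Fin n → A) → ℝ) (hP0 : ∀ x, 0 ≤ P x) (hP1 : ∑ x, P x = 1)
    (ξ : ℝ) (hξ0 : 0 < ξ) (hξ1 : ξ ≤ 1 / 2)
    (hdiv : kl P (prodPmf Q n) ≤ (n : ℝ) * ξ ^ 2 / (2 * Real.log 2)) :
    entropy P ≥ (n : ℝ) *
        (entropy Q - ξ * Real.logb 2 ((Fintype.card A : ℝ) / ξ)
          - ξ ^ 2 / (2 * Real.log 2)) := by
  obtain ⟨hL, hM⟩ := aux_moment Q hQpos hQ1 ξ hξ0 hξ1
  have h2 : 0 < Real.log 2 := Real.log_pos (by norm_num)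
  have hkl : kl P (prodPmf Q n) = (∑ x, P x * Real.log (P x) -
      ∑ x, P x * Real.log (∏ i, Q (x i))) / Real.log 2 := by
    rw [← Finset.sum_sub_distrib, Finset.sum_div]
    unfold kl prodPmf Real.logb
    apply Finset.sum_congr rfl
    intro x _
    rcases (hP0 x).eq_or_lt with h | h
    · rw [← h]; simp
    · rw [Real.log_div h.ne' (Finset.prod_pos fun i _ => hQpos _).ne']; ring
  rw [hkl, div_le_div_iff₀ h2 (by positivity)] at hdiv
  rw [entropy_mul, entropy_mul, Real.logb]
  set L := Real.log ((Fintype.card A : ℝ) / ξ)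
  have hm := aux_main n Q hQpos hQ1 P hP0 hP1 (ξ / L) (by positivity)
  set C := ∑ x, P x * Real.log (∏ i, Q (x i))
  set N := ∑ x, P x * Real.log (P x)
  set M := ∑ a, Q a * Real.log (Q a) ^ 2
  set H := ∑ a, Q a * Real.log (Q a)
  have hD : N - C ≤ n * ξ ^ 2 / 2 := by
    have : (N - C) * 2 * Real.log 2 ≤ n * ξ ^ 2 * Real.log 2 := by linarith
    have := le_of_mul_le_mul_right this h2
    linarith
  have hn0 : (0:ℝ) ≤ n := Nat.cast_nonneg n
  have hC : C ≤ n * (ξ * L + H) := by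
    have h3 : ξ / L * C ≤ ξ / L * (n * (ξ * L + H)) := by
      calc ξ / L * C ≤ _ := hm
        _ ≤ n * ξ ^ 2 / 2 + n * (ξ / L * H + (ξ / L) ^ 2 / 2 * L ^ 2) := by gcongr
        _ = _ := by field_simp; ring
    exact le_of_mul_le_mul_left h3 (by positivity)
  have e : (n:ℝ) * (-H / Real.log 2 - ξ * (L / Real.log 2) - ξ ^ 2 / (2 * Real.log 2))
    = (n * (-H - ξ * L - ξ ^ 2 / 2)) / Real.log 2 := by field_simp
  rw [e, ge_iff_le]
  gcongr
  linarith

lemma aux_second {B Ω : Type*} [Fintype B] [Fintype Ω] [DecidableEq B]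
    (P : B → ℝ) (R : Ω → ℝ) (hR : ∀ p, 0 ≤ R p) (g : Ω → B)
    (hP : ∀ x, P x = ∑ p ∈ Finset.univ.filter (fun p => g p = x), R p) :
    entropy P ≤ entropy R := by
  have h2 : 0 < Real.log 2 := Real.log_pos (by norm_num)
  rw [entropy_mul, entropy_mul]
  gcongr ?_ / _
  rw [neg_le_neg_iff]
  have e : ∑ x, P x * Real.log (P x) = ∑ p, R p * Real.log (P (g p)) := by
    rw [← Finset.sum_fiberwise (s := Finset.univ) (g := g)]
    apply Finset.sum_congr rfl
    intro x _
    conv_lhs => rw [hP x, Finset.sum_mul, ← hP x]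
    apply Finset.sum_congr rfl
    intro p hp
    rw [(Finset.mem_filter.1 hp).2]
  rw [e]
  apply Finset.sum_le_sum
  intro p _
  rcases (hR p).eq_or_lt with h | h
  · rw [← h]; simp
  · have : R p ≤ P (g p) := by
      rw [hP]
      exact Finset.single_le_sum (f := R) (fun i _ => hR i) (by simp)
    gcongr

/-- If `0 < ξ ≤ 1/2` and `D(P ‖ Qⁿ) ≤ n·ξ²/(2 ln 2)`, then
`H(P) ≥ n·(H(Q) − ξ·log₂(|A|/ξ) − ξ²/(2 ln 2))`; in particular, if `Aⁿ = f(W,Z)`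
is a deterministic function of a pair `(W,Z)` with joint pmf `P_{WZ}` inducing the
output pmf `P`, then `H(P_{WZ})` satisfies the same lower bound. -/
theorem rate_lower_bound {A : Type*} [Fintype A] [DecidableEq A]
    (n : ℕ) (hn : 0 < n)
    (Q : A → ℝ) (hQpos : ∀ a, 0 < Q a) (hQ1 : ∑ a, Q a = 1)
    (P : (Fin n → A) → ℝ) (hP0 : ∀ x, 0 ≤ P x) (hP1 : ∑ x, P x = 1)
    (ξ : ℝ) (hξ0 : 0 < ξ) (hξ1 : ξ ≤ 1 / 2)
    (hdiv : kl P (prodPmf Q n) ≤ (n : ℝ) * ξ ^ 2 / (2 * Real.log 2)) :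
    entropy P ≥ (n : ℝ) *
        (entropy Q - ξ * Real.logb 2 ((Fintype.card A : ℝ) / ξ)
          - ξ ^ 2 / (2 * Real.log 2))
    ∧ ∀ (W Z : Type) [Fintype W] [Fintype Z]
        (PWZ : W × Z → ℝ), (∀ p, 0 ≤ PWZ p) → (∑ p, PWZ p = 1) →
        ∀ f : W → Z → (Fin n → A),
          (∀ x, P x = ∑ p ∈ Finset.univ.filter (fun p : W × Z => f p.1 p.2 = x), PWZ p) →
          entropy PWZ ≥ (n : ℝ) *
            (entropy Q - ξ * Real.logb 2 ((Fintype.card A : ℝ) / ξ)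
              - ξ ^ 2 / (2 * Real.log 2)) := by
  have h := aux_first n Q hQpos hQ1 P hP0 hP1 ξ hξ0 hξ1 hdiv
  refine ⟨h, ?_⟩
  intro W Z _ _ PWZ h0 h1 f hf
  exact le_trans h (aux_second P PWZ h0 (fun p => f p.1 p.2) hf)
end
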